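/- If G is a 1-tough graph on n vertices with minimum degree δ ≥ n/3, then every longest cycle in G is a dominating cycle. (This follows from the exceptional-class theorem since every graph in the class 𝔉 has δ = (n − 2)/3 < n/3.) -/

import Mathlib

/-!
Suppose some edge lies off the longest cycle `C`. Let `P` be a longest path off `C`, with `ℓ ≥ 2`
vertices and ends `x` and `y`, let `H` be the component of `G \ C` containing it, and let `X` and
`Y` be the sets of neighbours of `x` and `y` on `C`.

* Toughness provides two attachments of `H` on `C`. Their successors `u` and `w` on `C` are the ends
  of a path covering `C` and part of `H`, and the usual crossing argument of Ore gives
  `deg u + deg w + |H| ≤ n` (`Comp.ore`). With `n ≤ 3δ` this yields `ℓ ≤ |H| ≤ δ`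
  (`Comp.two_mul_minDegree`).
* By maximality of `P` all neighbours of `x` and `y` off `C` are on `P`, so `X` and `Y` have at
  least `s = δ - ℓ + 1 ≥ 1` elements, and after rotating `P` one can assume `|X ∪ Y| ≥ 2`
  (`exists_good_path`).
* Cut `C` at `X ∪ Y`. As `C` is longest, every gap between consecutive attachments has length at
  least `2`, and at least `ℓ + 1` if its ends are attached to different ends of `P`
  (`Cyc.bypass`). If `X ≠ Y`, at least `max (|X ∩ Y| + 1) 2` gaps are long, and adding up the gaps
  gives `n > 3δ` (`att_eq`).
* If `X = Y`, all gaps are long. Deleting `X` must leave at most `|X|` components by toughness, so a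
  path off `X` links the interiors of two gaps, or of a gap and `P` (`exists_crossing`). Rerouting
  `C` along this path and `P` (`Cyc.bypass`, `Cyc.swap`) shows that the gaps involved
  exceed `ℓ + 1` by at least `2` in total, and again `n > 3δ` (`att_ne`).

Paths are handled as lists of vertices, and a cycle of length `m` as an `m`-periodic map `ℤ → V`.
-/

open SimpleGraph Finset

namespace Paper

variable {V : Type*}

/-- Number of connected components of `G` after deleting the vertex set `S`. -/
noncomputable def compCount (G : SimpleGraph V) (S : Set V) : ℕ :=
  Nat.card ((G.induce Sᶜ).ConnectedComponent)

/-- `G` is 1-tough: every cutset `S` satisfies `|S| ≥ s(G \ S)`. -/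
def OneTough [Fintype V] (G : SimpleGraph V) : Prop :=
  ∀ S : Finset V, 1 < compCount G ↑S → compCount G ↑S ≤ S.card

/-- The toughness of `G` equals 1. -/
def ToughnessEqOne [Fintype V] (G : SimpleGraph V) : Prop :=
  OneTough G ∧ ∃ S : Finset V, 1 < compCount G ↑S ∧ compCount G ↑S = S.card

/-- The vertex connectivity of `G` equals 2. -/
def ConnectivityEqTwo [Fintype V] (G : SimpleGraph V) : Prop :=
  (∀ S : Finset V, S.card ≤ 1 → (G.induce (↑S : Set V)ᶜ).Connected) ∧
  ∃ S : Finset V, S.card = 2 ∧ ¬ (G.induce (↑S : Set V)ᶜ).Connected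

/-- `G` is 3-connected: it stays connected after removing any 2 vertices. -/
def ThreeConnected [Fintype V] (G : SimpleGraph V) : Prop :=
  ∀ S : Finset V, S.card ≤ 2 → (G.induce (↑S : Set V)ᶜ).Connected

/-- `c` is a longest cycle of `G`. -/
def IsLongestCycle {G : SimpleGraph V} {u : V} (c : G.Walk u u) : Prop :=
  c.IsCycle ∧ ∀ (v : V) (d : G.Walk v v), d.IsCycle → d.length ≤ c.length

/-- The cycle `c` is dominating: `G \ V(c)` is edgeless. -/
def IsDominating {G : SimpleGraph V} {u : V} (c : G.Walk u u) : Prop :=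
  ∀ a b : V, G.Adj a b → a ∈ c.support ∨ b ∈ c.support

/-- The walk `p` avoids all vertices of the cycle `c`. -/
def AvoidsCycle {G : SimpleGraph V} {u x y : V} (c : G.Walk u u) (p : G.Walk x y) : Prop :=
  ∀ v ∈ p.support, v ∉ c.support

/-- `p` is a longest path of `G \ V(c)`. -/
def IsLongestPathOutside {G : SimpleGraph V} {u x y : V} (c : G.Walk u u)
    (p : G.Walk x y) : Prop :=
  p.IsPath ∧ AvoidsCycle c p ∧
  ∀ (a b : V) (q : G.Walk a b), q.IsPath → AvoidsCycle c q → q.length ≤ p.length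

/-- `N_C(x)`: the neighbors of `x` lying on the cycle `c`. -/
def NC [Fintype V] [DecidableEq V] (G : SimpleGraph V) [DecidableRel G.Adj]
    {u : V} (c : G.Walk u u) (x : V) : Finset V :=
  (G.neighborFinset x).filter (fun v => v ∈ c.support)

/-- The interior vertices of a segment (the walk minus its endpoints). -/
def interior {G : SimpleGraph V} {a b : V} (I : G.Walk a b) : Set V :=
  {v | v ∈ I.support ∧ v ≠ a ∧ v ≠ b}

/-- `I` is an elementary segment of the cycle `c` created by the attachment set `A`:
an arc of `c` between consecutive vertices of `A`. -/
def IsSegment {G : SimpleGraph V} {u : V} (c : G.Walk u u)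
    (A : Finset V) {a b : V} (I : G.Walk a b) : Prop :=
  I.IsPath ∧ 1 ≤ I.length ∧ a ∈ A ∧ b ∈ A ∧
  (∀ v ∈ I.support, v ∈ c.support) ∧
  (∀ e ∈ I.edges, e ∈ c.edges) ∧
  ∀ v ∈ interior I, v ∉ A

/-- `L` is an intermediate path between the elementary segments `Ia` and `Ib`:
it joins interior vertices of `Ia` and `Ib` and is internally disjoint from `c ∪ P`. -/
def IsIntermediatePath {G : SimpleGraph V} {u x y : V} (c : G.Walk u u) (P : G.Walk x y)
    {a b a' b' z w : V} (Ia : G.Walk a b) (Ib : G.Walk a' b') (L : G.Walk z w) : Prop :=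
  L.IsPath ∧ 1 ≤ L.length ∧ z ∈ interior Ia ∧ w ∈ interior Ib ∧
  ∀ v ∈ L.support, (v ∈ c.support ∨ v ∈ P.support) → v = z ∨ v = w

/-- Membership in the exceptional class `𝔉₁`. -/
def InF1 [Fintype V] (H : SimpleGraph V) [DecidableRel H.Adj] (d : ℕ) : Prop :=
  ∃ (x y₁ y₂ y₃ : V) (A : Fin 3 → Set V),
    (∀ i j, i ≠ j → A i ∩ A j = {x}) ∧
    (⋃ i, A i) = Set.univ ∧
    y₁ ∈ A 0 ∧ y₂ ∈ A 1 ∧ y₃ ∈ A 2 ∧ y₁ ≠ x ∧ y₂ ≠ x ∧ y₃ ≠ x ∧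
    H.Adj y₁ y₂ ∧ H.Adj y₂ y₃ ∧ H.Adj y₁ y₃ ∧
    (∀ a b : V, H.Adj a b → (∃ i, a ∈ A i ∧ b ∈ A i) ∨
      s(a, b) ∈ ({s(y₁, y₂), s(y₂, y₃), s(y₁, y₃)} : Set (Sym2 V))) ∧
    (∀ i, (H.induce (A i)).Connected) ∧
    Nat.card (A 0) = d + 1 ∧ Nat.card (A 1) = d + 1 ∧
    d + 1 ≤ Nat.card (A 2) ∧ Nat.card (A 2) ≤ d + 2 ∧
    H.minDegree = d ∧ 3 ≤ d

/-- Membership in the exceptional class `𝔉₂`. -/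
def InF2 [Fintype V] (H : SimpleGraph V) [DecidableRel H.Adj] : Prop :=
  ∃ (x z y₁ y₂ y₃ : V) (A : Fin 3 → Set V),
    (∀ i j, i ≠ j → A i ∩ A j = {x}) ∧
    ((⋃ i, A i) ∪ {z}) = Set.univ ∧ z ∉ ⋃ i, A i ∧
    y₁ ∈ A 0 ∧ y₂ ∈ A 1 ∧ y₃ ∈ A 2 ∧ y₁ ≠ x ∧ y₂ ≠ x ∧ y₃ ≠ x ∧
    H.Adj z y₁ ∧ H.Adj z y₂ ∧ H.Adj z y₃ ∧ H.Adj y₁ y₂ ∧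
    (∀ a b : V, H.Adj a b → (∃ i, a ∈ A i ∧ b ∈ A i) ∨
      s(a, b) ∈ ({s(z, y₁), s(z, y₂), s(z, y₃), s(y₁, y₂), s(y₁, y₃), s(y₂, y₃),
        s(z, x)} : Set (Sym2 V))) ∧
    (∀ i, Nat.card (A i) = 4) ∧ H.minDegree = 3

/-- Membership in the exceptional class `𝔉₃`. -/
def InF3 [Fintype V] (H : SimpleGraph V) [DecidableRel H.Adj] : Prop :=
  ∃ (x z y₁ y₂ y₃ : V) (A : Fin 3 → Set V),
    (∀ i j, i ≠ j → A i ∩ A j = {x}) ∧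
    ((⋃ i, A i) ∪ {z}) = Set.univ ∧ z ∉ ⋃ i, A i ∧
    y₁ ∈ A 0 ∧ y₂ ∈ A 1 ∧ y₃ ∈ A 2 ∧ y₁ ≠ x ∧ y₂ ≠ x ∧ y₃ ≠ x ∧
    H.Adj z y₁ ∧ H.Adj z y₂ ∧ H.Adj z y₃ ∧ H.Adj z x ∧ H.Adj y₁ y₂ ∧
    (∀ a b : V, H.Adj a b → (∃ i, a ∈ A i ∧ b ∈ A i) ∨
      s(a, b) ∈ ({s(z, y₁), s(z, y₂), s(z, y₃), s(z, x), s(y₁, y₂), s(y₁, y₃),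
        s(y₂, y₃)} : Set (Sym2 V))) ∧
    (∀ i, Nat.card (A i) = 5) ∧ H.minDegree = 4

/-- Membership in the exceptional class `𝔉₄`. -/
def InF4 [Fintype V] (H : SimpleGraph V) [DecidableRel H.Adj] : Prop :=
  ∃ (x y : V) (z : Fin 4 → V) (A : Fin 4 → Set V),
    x ≠ y ∧
    (∀ i j, i ≠ j → A i ∩ A j = {x, y}) ∧
    (⋃ i, A i) = Set.univ ∧
    (∀ i, z i ∈ A i ∧ z i ≠ x ∧ z i ≠ y) ∧
    H.Adj (z 0) (z 1) ∧ H.Adj (z 1) (z 2) ∧ H.Adj (z 0) (z 2) ∧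
    (∀ a b : V, H.Adj a b → (∃ i, a ∈ A i ∧ b ∈ A i) ∨
      s(a, b) ∈ ({s(z 0, z 1), s(z 1, z 2), s(z 0, z 2)} : Set (Sym2 V))) ∧
    (∀ i, Nat.card (A i) = 5) ∧ H.minDegree = 4

/-! ### Paths as lists -/

section

/-- `L` lists the vertices of a path of `G` from `s` to `t`. -/
def IsP (G : SimpleGraph V) (L : List V) (s t : V) : Prop :=
  L.Nodup ∧ L.IsChain G.Adj ∧ L.head? = some s ∧ L.getLast? = some t

/-- The vertices `y` and `z` are joined in `G` by a path whose interior is listed by `R`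
(possibly empty); no condition is imposed on `y` and `z` beyond the adjacencies. -/
def Link (G : SimpleGraph V) (y : V) (R : List V) (z : V) : Prop :=
  R.Nodup ∧ (y :: (R ++ [z])).IsChain G.Adj

variable {G : SimpleGraph V}

lemma IsP.reverse {L : List V} {s t : V} (h : IsP G L s t) : IsP G L.reverse t s := by
  obtain ⟨h1, h2, h3, h4⟩ := h
  refine ⟨List.nodup_reverse.2 h1, ?_, by simpa using h4, by simpa using h3⟩
  rw [List.isChain_reverse]
  exact h2.imp (fun a b h => h.symm)

lemma Link.reverse {R : List V} {y z : V} (h : Link G y R z) : Link G z R.reverse y := by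
  refine ⟨List.nodup_reverse.2 h.1, ?_⟩
  have : z :: (R.reverse ++ [y]) = (y :: (R ++ [z])).reverse := by simp
  rw [this, List.isChain_reverse]
  exact h.2.imp (fun a b h => h.symm)

lemma IsP.ne_nil {L : List V} {s t : V} (h : IsP G L s t) : L ≠ [] := by
  rintro rfl; simp [IsP] at h

lemma IsP.length_pos {L : List V} {s t : V} (h : IsP G L s t) : 1 ≤ L.length :=
  List.length_pos_iff.2 h.ne_nil

lemma IsP.head_mem {L : List V} {s t : V} (h : IsP G L s t) : s ∈ L :=
  List.mem_of_head? h.2.2.1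

lemma IsP.last_mem {L : List V} {s t : V} (h : IsP G L s t) : t ∈ L :=
  List.mem_of_getLast? h.2.2.2

lemma IsP.singleton (s : V) : IsP G [s] s s := by simp [IsP]

lemma link_nil {y z : V} : Link G y [] z ↔ G.Adj y z := by simp [Link]

lemma link_of_isP {L : List V} {s t y z : V} (h : IsP G L s t) (hy : G.Adj y s)
    (hz : G.Adj t z) : Link G y L z := by
  obtain ⟨h1, h2, h3, h4⟩ := h
  refine ⟨h1, ?_⟩
  rw [List.isChain_cons, List.isChain_append]
  refine ⟨?_, h2, by simp, ?_⟩
  · intro w hw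
    simp [h3] at hw
    exact hw ▸ hy
  · intro a ha b hb
    simp [h4] at ha hb
    subst ha; subst hb; exact hz

lemma Link.cases {R : List V} {y z : V} (h : Link G y R z) :
    (R = [] ∧ G.Adj y z) ∨ ∃ s t, IsP G R s t ∧ G.Adj y s ∧ G.Adj t z := by
  obtain ⟨h1, h2⟩ := h
  rcases R.eq_nil_or_concat with rfl | ⟨R', t, rfl⟩
  · left; simpa using h2
  right
  rw [List.isChain_cons, List.isChain_append] at h2
  obtain ⟨s, hs⟩ : ∃ s, (R' ++ [t]).head? = some s := by
    cases R' <;> simp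
  refine ⟨s, t, ⟨by simpa using h1, by simpa using h2.2.1, by simpa using hs, by simp⟩, ?_, ?_⟩
  · exact h2.1 s (by cases R' <;> simpa using hs)
  · exact h2.2.2.2 t (by simp) z (by simp)

lemma IsP.append {L M : List V} {s t s' t' : V} (h : IsP G L s t) (h' : IsP G M s' t')
    (ha : G.Adj t s') (hd : ∀ v ∈ L, v ∉ M) : IsP G (L ++ M) s t' := by
  obtain ⟨h1, h2, h3, h4⟩ := h
  obtain ⟨k1, k2, k3, k4⟩ := h'
  refine ⟨List.nodup_append.2 ⟨h1, k1, fun a ha b hb e => hd a ha (e ▸ hb)⟩, ?_, by simp [h3],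
    by simp [k4]⟩
  rw [List.isChain_append]
  refine ⟨h2, k2, ?_⟩
  intro x hx y hy
  simp [h4, k3] at hx hy
  subst hx; subst hy; exact ha

/-- Joining two disjoint paths by a link whose interior is disjoint from both. -/
lemma IsP.append_link {L M R : List V} {s t s' t' : V} (h : IsP G L s t) (h' : IsP G M s' t')
    (hl : Link G t R s') (hd : ∀ v ∈ L, v ∉ M) (hR : ∀ v ∈ R, v ∉ L ∧ v ∉ M) :
    IsP G (L ++ (R ++ M)) s t' := by
  rcases hl.cases with ⟨rfl, ha⟩ | ⟨a, b, hP, ha, hb⟩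
  · simpa using h.append h' ha hd
  · refine h.append (hP.append h' hb fun v hv => (hR v hv).2) ha ?_
    intro v hv hv'
    rcases List.mem_append.1 hv' with h1 | h1
    · exact (hR v h1).1 hv
    · exact hd v hv h1

lemma IsP.split {L M : List V} {s t w : V} (h : IsP G (L ++ w :: M) s t) :
    IsP G (L ++ [w]) s w ∧ IsP G (w :: M) w t := by
  obtain ⟨h1, h2, h3, h4⟩ := h
  have e : L ++ w :: M = (L ++ [w]) ++ M := by simp
  refine ⟨⟨?_, ?_, ?_, by simp⟩, ?_, ?_, by simp, ?_⟩
  · rw [e] at h1; exact (List.nodup_append.1 h1).1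
  · rw [e, List.isChain_append] at h2; exact h2.1
  · cases L <;> simpa using h3
  · exact (List.nodup_append.1 h1).2.1
  · exact (List.isChain_append.1 h2).2.1
  · simpa using h4

/-- A cyclic list of at least three vertices gives a cycle of the same length. -/
lemma exists_cycle {L : List V} {s t : V} (h : IsP G L s t) (hl : 3 ≤ L.length)
    (ha : G.Adj t s) : ∃ (v : V) (d : G.Walk v v), d.IsCycle ∧ d.length = L.length := by
  obtain ⟨h1, h2, h3, h4⟩ := h
  have hne : L ≠ [] := by rintro rfl; simp at hl
  have e1 : L.head hne = s := by
    rw [List.head?_eq_some_head hne] at h3; simpa using h3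
  have e2 : L.getLast hne = t := by
    rw [List.getLast?_eq_some_getLast hne] at h4; simpa using h4
  have hadj : G.Adj (L.getLast hne) (L.head hne) := by rw [e1, e2]; exact ha
  refine ⟨_, Walk.cons hadj (Walk.ofSupport L hne h2), ?_, ?_⟩
  · rw [Walk.isCycle_iff_isPath_tail_and_le_length]
    constructor
    · simp only [Walk.getVert_cons_succ, Walk.tail_cons, Walk.isPath_copy]
      rw [Walk.isPath_def, Walk.support_ofSupport]; exact h1
    · simp; omega
  · simp; omega

/-- One step of a walk inside the vertex set `U`. -/
def StepIn (G : SimpleGraph V) (U : Set V) (a b : V) : Prop := G.Adj a b ∧ a ∈ U ∧ b ∈ U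

/-- Vertices connected inside `U` are joined by a path inside `U`. -/
lemma exists_isP {U : Set V} {s t : V} (hs : s ∈ U) (h : Relation.ReflTransGen (StepIn G U) s t) :
    ∃ L, IsP G L s t ∧ ∀ v ∈ L, v ∈ U := by
  classical
  induction h using Relation.ReflTransGen.head_induction_on with
  | refl => exact ⟨[t], IsP.singleton t, by simpa using hs⟩
  | @head a b hac _ ih =>
    obtain ⟨L, hL, hU⟩ := ih hac.2.2
    by_cases ha : a ∈ L
    · obtain ⟨L1, L2, rfl⟩ := List.append_of_mem ha
      exact ⟨a :: L2, hL.split.2, fun v hv => hU v (List.mem_append_right _ hv)⟩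
    · refine ⟨[a] ++ L, (IsP.singleton a).append hL hac.1 (by simpa using ha), ?_⟩
      intro v hv
      rcases List.mem_append.1 hv with h1 | h1
      · simp at h1; exact h1 ▸ hs
      · exact hU v h1

lemma stepIn_symm {U : Set V} {s t : V} (h : Relation.ReflTransGen (StepIn G U) s t) :
    Relation.ReflTransGen (StepIn G U) t s := by
  refine Relation.ReflTransGen.mono ?_ _ _ h.swap
  rintro a b ⟨h1, h2, h3⟩
  exact ⟨h1.symm, h3, h2⟩

end

/-! ### A longest cycle as a periodic sequence -/

section

variable {G : SimpleGraph V}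

/-- `f` runs periodically around a longest cycle of `G`, of length `m`. -/
structure Cyc (G : SimpleGraph V) (m : ℕ) (f : ℤ → V) : Prop where
  three : 3 ≤ m
  adj : ∀ i, G.Adj (f i) (f (i + 1))
  eq_iff : ∀ i j, f i = f j ↔ (m : ℤ) ∣ i - j
  longest : ∀ L s t, IsP G L s t → 3 ≤ L.length → G.Adj t s → L.length ≤ m

lemma IsLongestCycle.exists_cyc {u : V} {c : G.Walk u u} (hc : IsLongestCycle c) :
    ∃ f : ℤ → V, Cyc G c.length f ∧ ∀ v, v ∈ c.support ↔ v ∈ Set.range f := by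
  have h3 := hc.1.three_le_length
  have hm0 : (0 : ℤ) < c.length := by omega
  have hlt : ∀ i : ℤ, (i % c.length).toNat < c.length := fun i => by
    have := Int.emod_lt_of_pos i hm0
    have := Int.emod_nonneg i hm0.ne'
    omega
  refine ⟨fun i => c.getVert (i % c.length).toNat, ⟨h3, ?_, ?_, ?_⟩, ?_⟩
  · intro i
    have h0 := Int.emod_nonneg i hm0.ne'
    have h1 := hlt i
    have key : c.getVert ((i + 1) % c.length).toNat = c.getVert ((i % c.length).toNat + 1) := by
      by_cases h : (i % c.length).toNat + 1 = c.length
      · have : (i + 1) % c.length = 0 := by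
          rw [Int.add_emod, show (i % (c.length : ℤ)) = c.length - 1 by omega,
            Int.emod_eq_of_lt (show (0 : ℤ) ≤ 1 by norm_num) (by omega)]
          simp
        rw [this, h]; simp
      · have : (i + 1) % c.length = i % c.length + 1 := by
          rw [Int.add_emod, Int.emod_eq_of_lt (show (0 : ℤ) ≤ 1 by norm_num) (by omega)]
          exact Int.emod_eq_of_lt (by omega) (by omega)
        rw [this]; congr 1; omega
    show G.Adj _ (c.getVert ((i + 1) % c.length).toNat)
    rw [key]
    exact c.adj_getVert_succ h1
  · intro i j
    rw [Int.dvd_iff_emod_eq_zero, ← Int.emod_eq_emod_iff_emod_sub_eq_zero]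
    constructor
    · intro e
      have hi := hlt i
      have hj := hlt j
      have := hc.1.getVert_injOn' (by simp only [Set.mem_ofPred_eq]; omega)
        (by simp only [Set.mem_ofPred_eq]; omega) e
      have := Int.emod_nonneg i hm0.ne'
      have := Int.emod_nonneg j hm0.ne'
      omega
    · intro e
      simp only [e]
  · intro L s t hL hl ha
    obtain ⟨v, d, hd, hdl⟩ := exists_cycle hL hl ha
    rw [← hdl]; exact hc.2 v d hd
  · intro v
    rw [Walk.mem_support_iff_exists_getVert]
    constructor
    · rintro ⟨n, rfl, hn⟩
      rcases hn.lt_or_eq with h | rfl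
      · refine ⟨n, ?_⟩
        show c.getVert ((n : ℤ) % c.length).toNat = _
        rw [Int.emod_eq_of_lt (by omega) (by omega)]; simp
      · exact ⟨0, by simp⟩
    · rintro ⟨i, rfl⟩
      exact ⟨_, rfl, (hlt i).le⟩

namespace Cyc
variable {m : ℕ} {f : ℤ → V}

lemma shift (h : Cyc G m f) (a : ℤ) : Cyc G m (fun i => f (a + i)) := by
  refine ⟨h.three, fun i => ?_, fun i j => ?_, h.longest⟩
  · have := h.adj (a + i)
    rwa [add_assoc] at this
  · rw [h.eq_iff]; simp

lemma rev (h : Cyc G m f) : Cyc G m (fun i => f (-i)) := by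
  refine ⟨h.three, fun i => ?_, fun i j => ?_, h.longest⟩
  · have := h.adj (-(i + 1))
    rw [show -(i + 1) + 1 = -i by ring] at this
    exact this.symm
  · rw [h.eq_iff, show -i - -j = -(i - j) by ring, dvd_neg]

lemma periodic (h : Cyc G m f) (i : ℤ) : f (i + m) = f i := by
  rw [h.eq_iff]; simp

lemma eq_of_lt (h : Cyc G m f) {i j : ℤ} (e : f i = f j) (h1 : i - j < m) (h2 : j - i < m) :
    i = j := by
  obtain ⟨k, hk⟩ := (h.eq_iff i j).1 e
  have : k < 1 := by nlinarith
  have : -1 < k := by nlinarith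
  have : k = 0 := by omega
  subst this; simp at hk; omega

/-- Every vertex of the cycle occurs in each window of `m` consecutive positions. -/
lemma exists_pos (h : Cyc G m f) {v : V} (hv : v ∈ Set.range f) (a : ℤ) :
    ∃ i, a ≤ i ∧ i < a + m ∧ f i = v := by
  obtain ⟨j, rfl⟩ := hv
  have h3 := h.three
  refine ⟨a + (j - a) % m, ?_, ?_, ?_⟩
  · have := Int.emod_nonneg (j - a) (show (m : ℤ) ≠ 0 by omega); omega
  · have := Int.emod_lt_of_pos (j - a) (show (0 : ℤ) < m by omega); omega
  · rw [h.eq_iff]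
    have := Int.emod_add_mul_ediv (j - a) m
    exact ⟨-((j - a) / m), by linarith⟩

/-- The stretch of the cycle from position `a` to position `b`, both included. -/
def arc (f : ℤ → V) (a b : ℤ) : List V := (List.range (b - a + 1).toNat).map fun t : ℕ => f (a + t)

lemma length_arc (a b : ℤ) : (arc f a b).length = (b - a + 1).toNat := by simp [arc]

lemma mem_arc {a b : ℤ} {v : V} : v ∈ arc f a b ↔ ∃ i, a ≤ i ∧ i ≤ b ∧ f i = v := by
  simp only [arc, List.mem_map, List.mem_range]
  constructor
  · rintro ⟨t, ht, rfl⟩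
    exact ⟨a + t, by omega, by omega, rfl⟩
  · rintro ⟨i, h1, h2, rfl⟩
    exact ⟨(i - a).toNat, by omega, by congr 1; omega⟩

lemma isP_arc (h : Cyc G m f) {a b : ℤ} (hab : a ≤ b) (hb : b < a + m) :
    IsP G (arc f a b) (f a) (f b) := by
  obtain ⟨n, hn⟩ : ∃ n : ℕ, b = a + n := ⟨(b - a).toNat, by omega⟩
  subst hn
  have e : (a + n - a + 1).toNat = n + 1 := by omega
  refine ⟨?_, ?_, ?_, ?_⟩
  · refine List.Nodup.map_on ?_ List.nodup_range
    intro x hx y hy e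
    simp at hx hy
    have := h.eq_of_lt e (by omega) (by omega)
    omega
  · rw [arc, e, List.isChain_map, List.isChain_range_succ]
    intro t _
    have := h.adj (a + t)
    rw [add_assoc] at this
    exact_mod_cast this
  · rw [arc, e]; simp [List.range_succ_eq_map]
  · rw [arc, e]; simp [List.range_succ]

/-- No closed list built from a path and a link between its ends beats the longest cycle. -/
lemma close (h : Cyc G m f) {L R : List V} {s t : V} (hL : IsP G L s t) (hR : Link G t R s)
    (hd : ∀ v ∈ R, v ∉ L) (hl : 3 ≤ L.length + R.length) : L.length + R.length ≤ m := by
  rcases hR.cases with ⟨rfl, ha⟩ | ⟨a, b, hP, ha, hb⟩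
  · exact h.longest L s t hL hl ha
  · have := h.longest (L ++ R) s b (hL.append hP ha fun v hv hv' => hd v hv' hv)
      (by simpa using hl) hb
    simpa using this

/-- Rerouting the cycle through a path outside it cannot gain length. -/
lemma bypass (h : Cyc G m f) {a g : ℤ} (hg : 1 ≤ g) (hgm : g < m) {R : List V}
    (hR : Link G (f a) R (f (a + g))) (hd : ∀ v ∈ R, v ∉ Set.range f) :
    (R.length : ℤ) ≤ g - 1 := by
  by_cases h0 : R = []
  · subst h0; simp; omega
  have hpos := List.length_pos_iff.2 h0
  have hL := h.isP_arc (a := a + g) (b := a + m) (by omega) (by omega)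
  rw [h.periodic] at hL
  have hlen := length_arc (f := f) (a + g) (a + m)
  have := h.close hL hR (fun v hv hv' => hd v hv (by
    obtain ⟨i, -, -, e⟩ := mem_arc.1 hv'; exact ⟨i, e⟩)) (by omega)
  omega

/-- Two disjoint links with crossing ends: replacing the stretches strictly between `a` and
`a + l` and strictly between `a + c` and `a + c + j` by the two links cannot gain length. -/
lemma swap (h : Cyc G m f) {a l c j : ℤ} (hl : 1 ≤ l) (hlc : l ≤ c) (hj : 1 ≤ j)
    (hjm : c + j ≤ m) {R R' : List V} (hR : Link G (f (a + c)) R (f a))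
    (hR' : Link G (f (a + c + j)) R' (f (a + l))) (hd : ∀ v ∈ R, v ∉ Set.range f)
    (hd' : ∀ v ∈ R', v ∉ Set.range f ∧ v ∉ R) (hne : R ≠ []) :
    (R.length : ℤ) + R'.length + 2 ≤ l + j := by
  have hpos := List.length_pos_iff.2 hne
  have h1 := h.isP_arc (a := a + l) (b := a + c) (by omega) (by omega)
  have h2 := (h.isP_arc (a := a + c + j) (b := a + m) (by omega) (by omega)).reverse
  rw [h.periodic] at h2
  have l1 := length_arc (f := f) (a + l) (a + c)
  have l2 := length_arc (f := f) (a + c + j) (a + m)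
  have m1 : ∀ v ∈ arc f (a + l) (a + c), v ∈ Set.range f := fun v hv => by
    obtain ⟨i, -, -, e⟩ := mem_arc.1 hv; exact ⟨i, e⟩
  have m2 : ∀ v ∈ (arc f (a + c + j) (a + m)).reverse, v ∈ Set.range f := fun v hv => by
    obtain ⟨i, -, -, e⟩ := mem_arc.1 (List.mem_reverse.1 hv); exact ⟨i, e⟩
  have h3 := h2.append_link h1 hR' (fun v hv hv' => by
      obtain ⟨i, i1, i2, e⟩ := mem_arc.1 (List.mem_reverse.1 hv)
      obtain ⟨i', i1', i2', e'⟩ := mem_arc.1 hv'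
      have := h.eq_of_lt (e.trans e'.symm) (by omega) (by omega)
      omega) (fun v hv => ⟨fun hv' => (hd' v hv).1 (m2 v hv'), fun hv' => (hd' v hv).1 (m1 v hv')⟩)
  have := h.close h3 hR (fun v hv hv' => by
      rcases List.mem_append.1 hv' with h4 | h4
      · exact hd v hv (m2 v h4)
      rcases List.mem_append.1 h4 with h4 | h4
      · exact (hd' v h4).2 hv
      · exact hd v hv (m1 v h4)) (by simp; omega)
  simp at this
  omega

end Cyc

end

/-! ### Components off the cycle and the degree-sum bound -/

section

variable {G : SimpleGraph V}

lemma IsP.take_drop {L : List V} {s t p q : V} (h : IsP G L s t) {i : ℕ} (hp : L[i]? = some p)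
    (hq : L[i + 1]? = some q) :
    IsP G (L.take (i + 1)) s p ∧ IsP G (L.drop (i + 1)) q t := by
  obtain ⟨h1, h2, h3, h4⟩ := h
  have hi : i + 1 < L.length := by
    by_contra hc
    rw [List.getElem?_eq_none (by omega)] at hq; simp at hq
  refine ⟨⟨h1.sublist (List.take_sublist _ _), h2.take _, ?_, ?_⟩,
    ⟨h1.sublist (List.drop_sublist _ _), h2.drop _, ?_, ?_⟩⟩
  · simp [List.head?_take, h3]
  · simp [List.getLast?_take, hp]
  · simp [List.head?_drop, hq]
  · simp [List.getLast?_drop, h4, hi]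

/-- `H` is closed under adjacency off the cycle `f`, connected, and disjoint from the cycle:
a (possibly empty) component of the graph minus the cycle. -/
structure Comp (G : SimpleGraph V) (f : ℤ → V) (H : Set V) : Prop where
  out : ∀ w ∈ H, w ∉ Set.range f
  conn : ∀ s ∈ H, ∀ t ∈ H, ∃ L, IsP G L s t ∧ ∀ v ∈ L, v ∈ H
  closed : ∀ w ∈ H, ∀ z, G.Adj w z → z ∉ Set.range f → z ∈ H

lemma exists_comp {f : ℤ → V} {x : V} (hx : x ∉ Set.range f) : ∃ H, x ∈ H ∧ Comp G f H := by
  let H : Set V := {w | Relation.ReflTransGen (StepIn G (Set.range f)ᶜ) x w}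
  have hout : ∀ w ∈ H, w ∉ Set.range f := by
    intro w hw
    induction (show Relation.ReflTransGen _ x w from hw) with
    | refl => exact hx
    | tail _ h _ => exact h.2.2
  have key : ∀ w ∈ H, Relation.ReflTransGen (StepIn G H) x w := by
    intro w hw
    induction (show Relation.ReflTransGen _ x w from hw) with
    | refl => exact .refl
    | tail h1 h2 ih => exact (ih h1).tail ⟨h2.1, h1, h1.tail h2⟩
  refine ⟨H, .refl, hout, ?_, ?_⟩
  · intro s hs t ht
    exact exists_isP hs ((stepIn_symm (key s hs)).trans (key t ht))
  · intro w hw z hz hzf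
    exact (show Relation.ReflTransGen _ x w from hw).tail ⟨hz, hout w hw, hzf⟩

variable {m : ℕ} {f : ℤ → V} {H : Set V}

/-- The successor on the cycle of an attachment of `H` is not itself an attachment. -/
lemma Comp.succ_not_adj (hC : Cyc G m f) (hH : Comp G f H) {a : ℤ} {h z : V} (hh : h ∈ H)
    (ha : G.Adj (f a) h) (hz : z ∈ H) : ¬ G.Adj (f (a + 1)) z := by
  intro hadj
  obtain ⟨L, hL, hLH⟩ := hH.conn h hh z hz
  have h3 := hC.three
  have := hC.bypass (a := a) (g := 1) le_rfl (by omega) (link_of_isP hL ha hadj.symm)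
    fun v hv => hH.out v (hLH v hv)
  have := hL.length_pos
  omega

/-- Ore-type count. Let `u` and `w` be the successors on the cycle of two attachments of `H`.
They are the ends of a path through all of the cycle and through some vertices of `H`; this path
is longer than the longest cycle, so consecutive vertices of it are never adjacent crosswise to
its ends. The predecessors on the path of the neighbours of `u`, the neighbours of `w`, the vertex
`w` itself and all of `H` but one vertex are therefore disjoint. -/
lemma Comp.ore [Fintype V] [DecidableEq V] [DecidableRel G.Adj] (hC : Cyc G m f)
    (hH : Comp G f H) {a c : ℤ} (hc1 : 1 ≤ c) (hcm : c < m) {h₁ h₂ : V} (hh₁ : h₁ ∈ H)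
    (hh₂ : h₂ ∈ H) (ha₁ : G.Adj (f a) h₁) (ha₂ : G.Adj (f (a + c)) h₂) {HF : Finset V}
    (hHF : ∀ v, v ∈ HF ↔ v ∈ H) :
    G.degree (f (a + 1)) + G.degree (f (a + c + 1)) + HF.card ≤ Fintype.card V := by
  obtain ⟨L, hL, hLH⟩ := hH.conn h₂ hh₂ h₁ hh₁
  have hA := hC.isP_arc (a := a + 1) (b := a + c) (by omega) (by omega)
  have hB := (hC.isP_arc (a := a + c + 1) (b := a + m) (by omega) (by omega)).reverse
  rw [hC.periodic] at hB
  have h3 := hC.three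
  have lA := Cyc.length_arc (f := f) (a + 1) (a + c)
  have lB := Cyc.length_arc (f := f) (a + c + 1) (a + m)
  have lL := hL.length_pos
  set A := Cyc.arc f (a + 1) (a + c) with hAdef
  set B := (Cyc.arc f (a + c + 1) (a + m)).reverse with hBdef
  set u := f (a + 1) with hu
  set w := f (a + c + 1) with hw
  have lB' : B.length = (Cyc.arc f (a + c + 1) (a + m)).length := by simp [hBdef]
  have mA : ∀ v ∈ A, v ∈ Set.range f := fun v hv => by
    obtain ⟨i, -, -, e⟩ := Cyc.mem_arc.1 hv; exact ⟨i, e⟩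
  have mB : ∀ v ∈ B, v ∈ Set.range f := fun v hv => by
    obtain ⟨i, -, -, e⟩ := Cyc.mem_arc.1 (List.mem_reverse.1 hv); exact ⟨i, e⟩
  have hT : IsP G (A ++ (L ++ B)) u w := by
    refine hA.append (hL.append hB ha₁.symm fun v hv hv' => hH.out v (hLH v hv) (mB v hv'))
      ha₂ fun v hv hv' => ?_
    rcases List.mem_append.1 hv' with h4 | h4
    · exact hH.out v (hLH v h4) (mA v hv)
    · obtain ⟨i, i1, i2, e⟩ := Cyc.mem_arc.1 hv
      obtain ⟨i', i1', i2', e'⟩ := Cyc.mem_arc.1 (List.mem_reverse.1 h4)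
      have := hC.eq_of_lt (e.trans e'.symm) (by omega) (by omega)
      omega
  have lT : m < (A ++ (L ++ B)).length := by simp only [List.length_append]; omega
  have hTcov : ∀ i, f i ∈ A ++ (L ++ B) := by
    intro i
    obtain ⟨j, j1, j2, e⟩ := hC.exists_pos ⟨i, rfl⟩ (a + 1)
    rw [← e]
    by_cases hj : j ≤ a + c
    · exact List.mem_append_left _ (Cyc.mem_arc.2 ⟨j, j1, hj, rfl⟩)
    · exact List.mem_append_right _ (List.mem_append_right _ (List.mem_reverse.2
        (Cyc.mem_arc.2 ⟨j, by omega, by omega, rfl⟩)))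
  have huH : ∀ z ∈ H, ¬ G.Adj u z := fun z hz => hH.succ_not_adj hC hh₁ ha₁ hz
  have hwH : ∀ z ∈ H, ¬ G.Adj w z := fun z hz => hH.succ_not_adj hC hh₂ ha₂ hz
  -- Only the last vertex of `H` on the path has its successor outside `H`.
  have hLast : ∀ i p q, (A ++ (L ++ B))[i]? = some p → (A ++ (L ++ B))[i + 1]? = some q → p ∈ H →
      q ∉ H → p = h₁ := by
    intro i p q hp hq hpH hqH
    have hnA : p ∉ A := fun hv => hH.out p hpH (mA p hv)
    have hnB : p ∉ B := fun hv => hH.out p hpH (mB p hv)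
    have hqL : q ∉ L := fun hv => hqH (hLH q hv)
    have hi : ¬ i < A.length := by
      intro hi
      rw [List.getElem?_append_left hi] at hp
      exact hnA (List.mem_of_getElem? hp)
    rw [List.getElem?_append_right (by omega)] at hp hq
    have hi2 : i - A.length < L.length := by
      by_contra hi2
      rw [List.getElem?_append_right (by omega)] at hp
      exact hnB (List.mem_of_getElem? hp)
    have hi3 : ¬ i + 1 - A.length < L.length := by
      intro hi3
      rw [List.getElem?_append_left hi3] at hq
      exact hqL (List.mem_of_getElem? hq)
    rw [List.getElem?_append_left hi2] at hp
    have h4 := hL.2.2.2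
    rw [List.getLast?_eq_getElem?, show L.length - 1 = i - A.length by omega, hp] at h4
    simpa using h4
  generalize A ++ (L ++ B) = T at hT lT hTcov hLast
  have huw : ¬ G.Adj w u := fun h => by
    have := hC.longest T u w hT (by omega) h
    omega
  -- Otherwise the path closes up to a cycle of length greater than `m`.
  have hcross : ∀ i p q, T[i]? = some p → T[i + 1]? = some q → G.Adj u q → ¬ G.Adj w p := by
    intro i p q hp hq huq hwp
    obtain ⟨h1, h2⟩ := hT.take_drop hp hq
    have h4 := h1.append h2.reverse hwp.symm (fun v hv hv' => by
      have := hT.1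
      rw [← List.take_append_drop (i + 1) T] at this
      exact (List.nodup_append.1 this).2.2 v hv v (List.mem_reverse.1 hv') rfl)
    have e : (T.take (i + 1) ++ (T.drop (i + 1)).reverse).length = T.length := by
      rw [List.length_append, List.length_reverse, ← List.length_append, List.take_append_drop]
    have := hC.longest _ _ _ h4 (by omega) huq.symm
    omega
  -- `Φ` sends a neighbour of `u` on the path to its predecessor and fixes the other ones.
  have hΦ : ∀ z, ∃ p, G.Adj u z →
      ((z ∉ T ∧ p = z) ∨ ∃ i, T[i]? = some p ∧ T[i + 1]? = some z) := by
    intro z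
    by_cases hz : z ∈ T
    · obtain ⟨n, hn⟩ := List.mem_iff_getElem?.1 hz
      rcases n with _ | n
      · refine ⟨z, fun h => ?_⟩
        have h4 := hT.2.2.1
        rw [List.head?_eq_getElem?, hn] at h4
        simp at h4
        exact absurd (h4 ▸ h) (G.irrefl)
      · have hlt : n + 1 < T.length := by
          by_contra hc
          rw [List.getElem?_eq_none (by omega)] at hn; simp at hn
        exact ⟨T[n], fun _ => Or.inr ⟨n, by simp, hn⟩⟩
    · exact ⟨z, fun _ => Or.inl ⟨hz, rfl⟩⟩
  choose Φ hΦ using hΦ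
  have hinj : Set.InjOn Φ (G.neighborFinset u : Set V) := by
    intro z hz z' hz' e
    simp at hz hz'
    rcases hΦ z hz with ⟨h1, h2⟩ | ⟨i, h1, h2⟩ <;> rcases hΦ z' hz' with ⟨k1, k2⟩ | ⟨j, k1, k2⟩
    · rw [← h2, ← k2, e]
    · exact absurd (List.mem_of_getElem? k1) (by rw [← e, h2]; exact h1)
    · exact absurd (List.mem_of_getElem? h1) (by rw [e, k2]; exact k1)
    · have hi : i < T.length := by
        by_contra hc
        rw [List.getElem?_eq_none (by omega)] at h1; simp at h1
      rw [e, ← k1] at h1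
      have := (List.getElem?_inj hi hT.1).1 h1
      subst this
      rw [h2] at k2; simpa using k2
  have d1 : Disjoint ((G.neighborFinset u).image Φ) (G.neighborFinset w) := by
    rw [Finset.disjoint_left]
    intro p hp hpw
    obtain ⟨z, hz, rfl⟩ := Finset.mem_image.1 hp
    simp at hz hpw
    rcases hΦ z hz with ⟨h1, h2⟩ | ⟨i, h1, h2⟩
    · rw [h2] at hpw
      have := hC.close hT (R := [z]) (link_of_isP (IsP.singleton z) hpw hz.symm)
        (by simpa using h1) (by omega)
      simp at this; omega
    · exact hcross i _ _ h1 h2 hz hpw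
  have d2 : Disjoint ((G.neighborFinset u).image Φ ∪ G.neighborFinset w)
      (insert w (HF.erase h₁)) := by
    rw [Finset.disjoint_left]
    intro p hp hp'
    rw [Finset.mem_insert, Finset.mem_erase, hHF] at hp'
    rcases Finset.mem_union.1 hp with hp | hp
    · obtain ⟨z, hz, rfl⟩ := Finset.mem_image.1 hp
      simp at hz
      rcases hΦ z hz with ⟨h1, h2⟩ | ⟨i, h1, h2⟩
      · rw [h2] at hp'
        rcases hp' with rfl | ⟨-, hp'⟩
        · exact huw hz.symm
        · exact huH z hp' hz
      · rcases hp' with h5 | ⟨h5, hp'⟩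
        · have hi : i < T.length := by
            by_contra hc
            rw [List.getElem?_eq_none (by omega)] at h1; simp at h1
          have h4 := hT.2.2.2
          rw [List.getLast?_eq_getElem?, ← h5, ← h1] at h4
          have := (List.getElem?_inj (by omega) hT.1).1 h4
          rw [List.getElem?_eq_none (by omega)] at h2; simp at h2
        · exact h5 (hLast i _ _ h1 h2 hp' fun hzH => huH z hzH hz)
    · simp at hp
      rcases hp' with rfl | ⟨-, hp'⟩
      · exact G.irrefl hp
      · exact hwH p hp' hp
  have hwHF : w ∉ HF.erase h₁ := by
    rw [Finset.mem_erase, hHF]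
    exact fun h => hH.out w h.2 ⟨_, rfl⟩
  have c1 := Finset.card_le_univ
    ((G.neighborFinset u).image Φ ∪ G.neighborFinset w ∪ insert w (HF.erase h₁))
  rw [Finset.card_union_of_disjoint d2, Finset.card_union_of_disjoint d1,
    Finset.card_image_of_injOn hinj, Finset.card_insert_of_notMem hwHF,
    Finset.card_erase_of_mem ((hHF _).2 hh₁), G.card_neighborFinset_eq_degree,
    G.card_neighborFinset_eq_degree] at c1
  have : 0 < HF.card := Finset.card_pos.2 ⟨h₁, (hHF _).2 hh₁⟩
  omega

end

/-! ### Toughness and attachments -/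

section

variable {G : SimpleGraph V}

/-- In a 1-tough graph, among more than `max 1 |S|` vertices outside `S` some two lie in the same
component of `G \ S`. -/
lemma OneTough.exists_path [Fintype V] (hT : OneTough G) (S : Finset V) {ι : Type*} [Fintype ι]
    (g : ι → V) (hg : ∀ i, g i ∉ S) (h1 : 1 < Fintype.card ι) (h : S.card < Fintype.card ι) :
    ∃ i j, i ≠ j ∧ Relation.ReflTransGen (StepIn G (↑S)ᶜ) (g i) (g j) := by
  classical
  let K := (G.induce (↑S : Set V)ᶜ).ConnectedComponent
  have hfin : Finite K := Quot.finite _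
  let _ : Fintype K := Fintype.ofFinite K
  have hK : Fintype.card K < Fintype.card ι := by
    by_contra hlt
    push Not at hlt
    have e : compCount G ↑S = Fintype.card K := Nat.card_eq_fintype_card
    have := hT S (by omega)
    omega
  obtain ⟨i, j, hij, e⟩ := Fintype.exists_ne_map_eq_of_card_lt
    (fun i : ι => (G.induce (↑S : Set V)ᶜ).connectedComponentMk ⟨g i, by simpa using hg i⟩) hK
  refine ⟨i, j, hij, ?_⟩
  have hr := SimpleGraph.ConnectedComponent.exact e
  rw [SimpleGraph.reachable_iff_reflTransGen] at hr
  exact Relation.ReflTransGen.lift (p := StepIn G (↑S)ᶜ) Subtype.val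
    (fun a b hab => ⟨hab, a.2, b.2⟩) _ _ hr

variable {m : ℕ} {f : ℤ → V} {H : Set V}

lemma Comp.exists_attach_ne [Fintype V] (hT : OneTough G) (hC : Cyc G m f) (hH : Comp G f H)
    {x : V} (hx : x ∈ H) {v : V} (hv : v ∈ Set.range f) :
    ∃ v' ∈ Set.range f, v' ≠ v ∧ ∃ h ∈ H, G.Adj v' h := by
  by_contra hcon
  push Not at hcon
  obtain ⟨i, rfl⟩ := hv
  have hne : f (i + 1) ≠ f i := (hC.adj i).ne'
  have hxi : x ≠ f i := fun e => hH.out x hx ⟨i, e.symm⟩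
  have key : Relation.ReflTransGen (StepIn G (↑({f i} : Finset V))ᶜ) x (f (i + 1)) := by
    obtain ⟨p, q, hpq, h⟩ := hT.exists_path {f i} (fun b : Bool => if b then x else f (i + 1))
      (by rintro (_ | _) <;> simp [hne, hxi]) (by simp) (by simp)
    cases p <;> cases q <;> simp at hpq h
    · simpa using stepIn_symm h
    · simpa using h
  have hin : ∀ w, Relation.ReflTransGen (StepIn G (↑({f i} : Finset V))ᶜ) x w → w ∈ H := by
    intro w hw
    induction hw with
    | refl => exact hx
    | @tail b c _ h2 ih =>
      refine hH.closed _ ih _ h2.1 fun hr => ?_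
      exact hcon c hr (by simpa using h2.2.2) b ih h2.1.symm
  exact hH.out _ (hin _ key) ⟨_, rfl⟩

lemma Comp.two_mul_minDegree [Fintype V] [DecidableEq V] [DecidableRel G.Adj] (hT : OneTough G)
    (hC : Cyc G m f) (hH : Comp G f H) {x : V} (hx : x ∈ H)
    {HF : Finset V} (hHF : ∀ v, v ∈ HF ↔ v ∈ H) :
    2 * G.minDegree + HF.card ≤ Fintype.card V := by
  obtain ⟨v, hv, -, h, hh, hvh⟩ := hH.exists_attach_ne hT hC hx (v := f 0) ⟨_, rfl⟩
  obtain ⟨v', hv', hne, h', hh', hvh'⟩ := hH.exists_attach_ne hT hC hx hv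
  obtain ⟨a, rfl⟩ := hv
  obtain ⟨b, hb1, hb2, rfl⟩ := hC.exists_pos hv' a
  have hab : b ≠ a := fun e => hne (by rw [e])
  have := hH.ore hC (a := a) (c := b - a) (by omega) (by omega) hh hh' hvh (by simpa using hvh') hHF
  have := G.minDegree_le_degree (f (a + 1))
  have := G.minDegree_le_degree (f (a + (b - a) + 1))
  omega

end

/-! ### A longest path off the cycle -/

section

variable {G : SimpleGraph V}

open Classical in
/-- The neighbours of `x` on the cycle `f`. -/
noncomputable def att [Fintype V] (G : SimpleGraph V) (f : ℤ → V) (x : V) : Finset V :=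
  univ.filter fun v => G.Adj x v ∧ v ∈ Set.range f

lemma mem_att [Fintype V] {f : ℤ → V} {x v : V} :
    v ∈ att G f x ↔ G.Adj x v ∧ v ∈ Set.range f := by simp [att]

variable {m : ℕ} {f : ℤ → V} {H : Set V}

/-- `P`, with ends `x` and `y`, is longest among all paths off the cycle `f`. -/
structure MaxP (G : SimpleGraph V) (f : ℤ → V) (P : List V) (x y : V) : Prop where
  isP : IsP G P x y
  out : ∀ v ∈ P, v ∉ Set.range f
  max : ∀ Q s t, IsP G Q s t → (∀ v ∈ Q, v ∉ Set.range f) → Q.length ≤ P.length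

lemma MaxP.reverse {P : List V} {x y : V} (h : MaxP G f P x y) : MaxP G f P.reverse y x :=
  ⟨h.isP.reverse, fun v hv => h.out v (by simpa using hv), by simpa using h.max⟩

lemma exists_maxP [Fintype V] {a b : V} (hab : G.Adj a b) (ha : a ∉ Set.range f)
    (hb : b ∉ Set.range f) : ∃ P x y, MaxP G f P x y ∧ 2 ≤ P.length := by
  classical
  let p : ℕ → Prop := fun k => ∃ P x y, IsP G P x y ∧ (∀ v ∈ P, v ∉ Set.range f) ∧ P.length = k
  have hbd : ∀ k, p k → k ≤ Fintype.card V := by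
    rintro k ⟨P, x, y, h, -, rfl⟩
    exact h.1.length_le_card
  have h2 : p 2 := ⟨[a, b], a, b, by simp [IsP, hab, hab.ne], by simp [-Set.mem_range, ha, hb], rfl⟩
  obtain ⟨P, x, y, hP, hout, hl⟩ := Nat.findGreatest_spec (hbd 2 h2) h2
  refine ⟨P, x, y, ⟨hP, hout, fun Q s t hQ hQo => ?_⟩, ?_⟩
  · have hq : p Q.length := ⟨Q, s, t, hQ, hQo, rfl⟩
    rw [hl]; exact Nat.le_findGreatest (hbd _ hq) hq
  · rw [hl]; exact Nat.le_findGreatest (hbd 2 h2) h2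

lemma MaxP.neighbor {P : List V} {x y : V} (h : MaxP G f P x y) {z : V} (hz : G.Adj x z)
    (hzf : z ∉ Set.range f) : z ∈ P := by
  by_contra hn
  have := h.max _ _ _ ((IsP.singleton z).append h.isP hz.symm (by simpa using hn))
    (by simpa [-Set.mem_range, hzf] using h.out)
  simp at this

lemma MaxP.neighbor_subset [Fintype V] [DecidableEq V] [DecidableRel G.Adj] {P : List V} {x y : V}
    (h : MaxP G f P x y) : G.neighborFinset x ⊆ P.toFinset.erase x ∪ att G f x := by
  intro z hz
  rw [mem_neighborFinset] at hz
  by_cases hzf : z ∈ Set.range f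
  · exact mem_union_right _ (mem_att.2 ⟨hz, hzf⟩)
  · exact mem_union_left _ (mem_erase.2 ⟨hz.ne', List.mem_toFinset.2 (h.neighbor hz hzf)⟩)

lemma MaxP.card_union_le [Fintype V] [DecidableEq V] {P : List V} {x y : V}
    (h : MaxP G f P x y) :
    (P.toFinset.erase x ∪ att G f x).card + 1 ≤ P.length + (att G f x).card := by
  have h1 := Finset.card_union_le (P.toFinset.erase x) (att G f x)
  have h2 := card_erase_of_mem (List.mem_toFinset.2 h.isP.head_mem)
  rw [List.toFinset_card_of_nodup h.isP.1] at h2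
  have := h.isP.length_pos
  omega

lemma MaxP.minDegree_le [Fintype V] [DecidableEq V] [DecidableRel G.Adj] {P : List V} {x y : V}
    (h : MaxP G f P x y) : G.minDegree + 1 ≤ P.length + (att G f x).card := by
  have h1 := card_le_card h.neighbor_subset
  have h2 := h.card_union_le
  have h3 := G.minDegree_le_degree x
  rw [← G.card_neighborFinset_eq_degree] at h3
  omega

lemma Comp.path_subset (hH : Comp G f H) {P : List V} : ∀ {x y : V}, IsP G P x y → x ∈ H →
    (∀ v ∈ P, v ∉ Set.range f) → ∀ v ∈ P, v ∈ H := by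
  induction P with
  | nil => simp
  | cons p P ih =>
    intro x y hP hx hout v hv
    obtain ⟨h1, h2, h3, h4⟩ := hP
    obtain rfl : p = x := by simpa using h3
    rcases List.mem_cons.1 hv with rfl | hv
    · exact hx
    · cases P with
      | nil => simp at hv
      | cons q Q =>
        rw [List.isChain_cons_cons] at h2
        refine ih (x := q) (y := y) ⟨h1.of_cons, h2.2, rfl, by simpa using h4⟩ ?_
          (fun v hv => hout v (List.mem_cons_of_mem _ hv)) v hv
        exact hH.closed _ hx _ h2.1 (hout _ (by simp))

/-- A longest path off the cycle can be chosen so that its ends have at least two neighbours on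
the cycle between them. If both ends only see the vertex `v` of the cycle, then the degree bounds
force the path to span its component and its end `y` to see all of it; the path can then be
rotated so as to start at any vertex `w` of the component attached elsewhere on the cycle. -/
lemma exists_good_path [Fintype V] [DecidableEq V] [DecidableRel G.Adj] (hT : OneTough G)
    (hC : Cyc G m f) (hn : Fintype.card V ≤ 3 * G.minDegree) {a b : V} (hab : G.Adj a b)
    (ha : a ∉ Set.range f) (hb : b ∉ Set.range f) :
    ∃ P x y, MaxP G f P x y ∧ 2 ≤ P.length ∧ P.length ≤ G.minDegree ∧
      2 ≤ (att G f x ∪ att G f y).card := by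
  classical
  obtain ⟨P, x, y, hP, hl⟩ := exists_maxP hab ha hb
  obtain ⟨H, hx, hH⟩ := exists_comp (G := G) (hP.out x hP.isP.head_mem)
  have hPH := hH.path_subset hP.isP hx hP.out
  let HF : Finset V := univ.filter (· ∈ H)
  have hHF : ∀ v, v ∈ HF ↔ v ∈ H := by simp [HF]
  have hcard := hH.two_mul_minDegree hT hC hx hHF
  have hsub : P.toFinset ⊆ HF := fun v hv => (hHF v).2 (hPH v (List.mem_toFinset.1 hv))
  have hPc := List.toFinset_card_of_nodup hP.isP.1
  have hle := card_le_card hsub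
  have hlδ : P.length ≤ G.minDegree := by omega
  by_cases h2 : 2 ≤ (att G f x ∪ att G f y).card
  · exact ⟨P, x, y, hP, hl, hlδ, h2⟩
  have hdx := hP.minDegree_le
  have hdy := hP.reverse.minDegree_le
  rw [List.length_reverse] at hdy
  have hux := card_le_card (subset_union_left (s₁ := att G f x) (s₂ := att G f y))
  have huy := card_le_card (subset_union_right (s₁ := att G f x) (s₂ := att G f y))
  have hHP : P.toFinset = HF := eq_of_subset_of_card_le hsub (by omega)
  obtain ⟨v, hv⟩ := card_pos.1 (show 0 < (att G f x).card by omega)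
  have hvu : ∀ z ∈ att G f x ∪ att G f y, z = v := by
    intro z hz
    exact card_le_one.1 (by omega) z hz v (mem_union_left _ hv)
  have hyadj : ∀ w ∈ P, w ≠ y → G.Adj y w := by
    have h1 := hP.reverse.neighbor_subset
    have h2 := hP.reverse.card_union_le
    have h3 := G.minDegree_le_degree y
    rw [← G.card_neighborFinset_eq_degree] at h3
    rw [List.length_reverse] at h2
    have h4 := eq_of_subset_of_card_le h1 (by omega)
    intro w hw hwy
    rw [← mem_neighborFinset, h4]
    exact mem_union_left _ (mem_erase.2 ⟨hwy, by simpa using hw⟩)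
  obtain ⟨v', hv', hne, w, hw, hvw⟩ := hH.exists_attach_ne hT hC hx (mem_att.1 hv).2
  have hwx : w ≠ x := by
    rintro rfl
    exact hne (hvu _ (mem_union_left _ (mem_att.2 ⟨hvw.symm, hv'⟩)))
  have hwP : w ∈ P := by rw [← List.mem_toFinset, hHP, hHF]; exact hw
  obtain ⟨P1, P2, rfl⟩ := List.append_of_mem hwP
  rcases List.eq_nil_or_concat P1 with rfl | ⟨P0, u, rfl⟩
  · exact absurd (by simpa using hP.isP.2.2.1) hwx
  have hnd := hP.isP.1
  have hdis : ∀ z ∈ w :: P2, z ∉ P0 ++ [u] := by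
    intro z hz hz'
    exact (List.nodup_append.1 hnd).2.2 z (by simpa using hz') z hz rfl
  have hA := (hP.isP.split).2
  have hB : IsP G (P0 ++ [u]) x u := by
    refine (IsP.split (M := w :: P2) (t := y) ?_).1
    simpa using hP.isP
  have huy : u ≠ y := by
    rintro rfl
    exact hdis u hA.last_mem (by simp)
  have hadj : G.Adj y u := hyadj u (by simp) huy
  refine ⟨(w :: P2) ++ (P0 ++ [u]).reverse, w, x, ⟨?_, ?_, ?_⟩, ?_, ?_, ?_⟩
  · exact hA.append hB.reverse hadj (fun z hz => by rw [List.mem_reverse]; exact hdis z hz)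
  · intro z hz
    refine hP.out z ?_
    simp only [List.mem_append, List.mem_reverse, List.mem_cons, List.concat_eq_append] at hz ⊢
    tauto
  · intro Q s t hQ hQo
    have := hP.max Q s t hQ hQo
    simp at this ⊢; omega
  · simp at hl ⊢; omega
  · simp at hlδ ⊢; omega
  · refine one_lt_card.2 ⟨v', mem_union_left _ (mem_att.2 ⟨hvw.symm, hv'⟩), v,
      mem_union_right _ hv, hne⟩

end

/-! ### Gaps between attachments -/

section

variable {G : SimpleGraph V}
variable {m : ℕ} {f : ℤ → V}

/-- For each `v` in the set `A` of vertices of the cycle `f`, of length `m`, `p v` is a position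
of `v` on the cycle and `g v` is the distance from `v` to the next vertex of `A`. -/
structure Gap (f : ℤ → V) (m : ℕ) (A : Finset V) (p g : V → ℤ) : Prop where
  pos : ∀ v ∈ A, f (p v) = v
  one_le : ∀ v ∈ A, 1 ≤ g v
  lt : ∀ v ∈ A, g v < m
  next : ∀ v ∈ A, f (p v + g v) ∈ A
  notMem : ∀ v ∈ A, ∀ t, 0 < t → t < g v → f (p v + t) ∉ A

lemma Cyc.add_eq (hC : Cyc G m f) {i j : ℤ} (h : f i = f j) (t : ℤ) : f (i + t) = f (j + t) := by
  rw [hC.eq_iff] at h ⊢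
  simpa using h

lemma exists_gap (hC : Cyc G m f) {A : Finset V} (hA : ∀ v ∈ A, v ∈ Set.range f)
    (hk : 2 ≤ A.card) : ∃ p g, Gap f m A p g := by
  classical
  have key : ∀ v : V, ∃ q : ℤ × ℤ, v ∈ A → f q.1 = v ∧ 1 ≤ q.2 ∧ q.2 < m ∧ f (q.1 + q.2) ∈ A ∧
      ∀ t, 0 < t → t < q.2 → f (q.1 + t) ∉ A := by
    intro v
    by_cases hv : v ∈ A
    swap
    · exact ⟨0, fun h => absurd h hv⟩
    obtain ⟨i, rfl⟩ := hA v hv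
    obtain ⟨w, hw, hne⟩ := exists_mem_ne (s := A) (by omega) (f i)
    obtain ⟨j, hj1, hj2, rfl⟩ := hC.exists_pos (hA w hw) i
    have hji : j ≠ i := fun e => hne (by rw [e])
    have hex : ∃ d : ℕ, 1 ≤ d ∧ f (i + d) ∈ A := by
      refine ⟨(j - i).toNat, by omega, ?_⟩
      rwa [show i + ((j - i).toNat : ℤ) = j by omega]
    obtain ⟨h1, h2⟩ := Nat.find_spec hex
    have h3 : Nat.find hex ≤ (j - i).toNat := Nat.find_min' hex
      ⟨by omega, by rwa [show i + ((j - i).toNat : ℤ) = j by omega]⟩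
    refine ⟨(i, Nat.find hex), fun _ => ⟨rfl, by simp, by omega, h2, ?_⟩⟩
    intro t ht1 ht2 hta
    have := Nat.find_min' hex (m := t.toNat)
      ⟨by omega, by rwa [show ((t.toNat : ℕ) : ℤ) = t by omega]⟩
    simp only at ht2; omega
  choose q hq using key
  exact ⟨fun v => (q v).1, fun v => (q v).2, fun v hv => (hq v hv).1, fun v hv => (hq v hv).2.1,
    fun v hv => (hq v hv).2.2.1, fun v hv => (hq v hv).2.2.2.1, fun v hv => (hq v hv).2.2.2.2⟩

namespace Gap
variable {A : Finset V} {p g : V → ℤ}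

lemma inj (hG : Gap f m A p g) (hC : Cyc G m f) {v w : V} (hv : v ∈ A) (hw : w ∈ A) {t t' : ℤ}
    (h0 : 0 ≤ t) (h1 : t < g v) (h0' : 0 ≤ t') (h1' : t' < g w) (e : f (p v + t) = f (p w + t')) :
    v = w ∧ t = t' := by
  wlog htt : t ≤ t' generalizing v w t t'
  · have := this hw hv h0' h1' h0 h1 e.symm (by omega)
    exact ⟨this.1.symm, this.2.symm⟩
  have e' : f (p w + (t' - t)) = v := by
    have := hC.add_eq e.symm (-t)
    rw [show p w + t' + -t = p w + (t' - t) by ring, show p v + t + -t = p v by ring,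
      hG.pos v hv] at this
    exact this
  rcases htt.lt_or_eq with h | rfl
  · exact absurd (e' ▸ hv) (hG.notMem w hw _ (by omega) (by omega))
  · rw [sub_self, add_zero, hG.pos w hw] at e'
    exact ⟨e'.symm, rfl⟩

/-- The arcs of the cycle between consecutive vertices of `A` are disjoint from each other and from
the path `P` off the cycle. -/
lemma sum_le (hG : Gap f m A p g) (hC : Cyc G m f) [Fintype V] {P : List V} (hP : P.Nodup)
    (hout : ∀ v ∈ P, v ∉ Set.range f) : ∑ v ∈ A, g v + P.length ≤ Fintype.card V := by
  classical
  let T : Finset (Σ _ : V, ℤ) := A.sigma fun v => Finset.Ico 0 (g v)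
  have hinj : Set.InjOn (fun q : Σ _ : V, ℤ => f (p q.1 + q.2)) T := by
    rintro ⟨v, t⟩ hv ⟨w, t'⟩ hw e
    simp only [T, coe_sigma, Set.mem_sigma_iff, mem_coe, mem_Ico] at hv hw
    obtain ⟨rfl, rfl⟩ := hG.inj hC hv.1 hw.1 hv.2.1 hv.2.2 hw.2.1 hw.2.2 e
    rfl
  have h1 := card_image_of_injOn hinj
  have h2 : (T.card : ℤ) = ∑ v ∈ A, g v := by
    simp only [T, card_sigma, Int.card_Ico, sub_zero, Nat.cast_sum]
    refine sum_congr rfl fun v hv => ?_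
    have := hG.one_le v hv
    omega
  have hd : Disjoint (T.image fun q => f (p q.1 + q.2)) P.toFinset := by
    rw [Finset.disjoint_left]
    intro z hz hzP
    obtain ⟨q, -, rfl⟩ := mem_image.1 hz
    exact hout _ (by simpa using hzP) ⟨_, rfl⟩
  have h3 := card_union_of_disjoint hd
  rw [List.toFinset_card_of_nodup hP] at h3
  have h4 := card_le_univ (T.image (fun q => f (p q.1 + q.2)) ∪ P.toFinset)
  omega

lemma cover (hG : Gap f m A p g) (hC : Cyc G m f) (hA : ∀ v ∈ A, v ∈ Set.range f)
    (hne : A.Nonempty) {u : V} (hu : u ∈ Set.range f) :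
    ∃ w ∈ A, ∃ t, 0 ≤ t ∧ t < g w ∧ f (p w + t) = u := by
  classical
  obtain ⟨i, rfl⟩ := hu
  obtain ⟨v, hv⟩ := hne
  obtain ⟨j, hj1, hj2, rfl⟩ := hC.exists_pos (hA v hv) (i - m + 1)
  have hex : ∃ d : ℕ, f (i - d) ∈ A := by
    refine ⟨(i - j).toNat, ?_⟩
    rwa [show i - ((i - j).toNat : ℤ) = j by omega]
  have hw := Nat.find_spec hex
  set d := Nat.find hex with hd
  have hp := hG.pos _ hw
  refine ⟨_, hw, d, by omega, ?_, ?_⟩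
  · by_contra hlt
    have h1 := hG.one_le _ hw
    have h2 := hG.next _ hw
    rw [hC.add_eq hp] at h2
    have := Nat.find_min' hex (m := (d - g (f (i - d))).toNat) (by
      rwa [show i - (((d - g (f (i - d))).toNat : ℕ) : ℤ) = i - d + g (f (i - d)) by omega])
    omega
  · rw [hC.add_eq hp]; congr 1; ring

lemma order (hG : Gap f m A p g) (hC : Cyc G m f) (hA : ∀ v ∈ A, v ∈ Set.range f) {v w : V}
    (hv : v ∈ A) (hw : w ∈ A) (hne : v ≠ w) :
    ∃ c, f (p v + c) = w ∧ g v ≤ c ∧ c + g w ≤ m := by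
  obtain ⟨j, h1, h2, e⟩ := hC.exists_pos (hA w hw) (p v)
  have hjv : j ≠ p v := by
    rintro rfl
    exact hne ((hG.pos v hv).symm.trans e)
  refine ⟨j - p v, by rw [← e]; congr 1; ring, ?_, ?_⟩
  · by_contra h
    refine hG.notMem v hv (j - p v) (by omega) (by omega) ?_
    rwa [show p v + (j - p v) = j by ring, e]
  · by_contra h
    refine hG.notMem w hw (m - (j - p v)) (by omega) (by omega) ?_
    rw [hC.add_eq ((hG.pos w hw).trans e.symm), show j + (m - (j - p v)) = p v + m by ring,
      hC.periodic, hG.pos v hv]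
    exact hv

/-- Going round the cycle from a vertex of `X \ Y`, somewhere one passes from `X \ Y` to `Y`. -/
lemma exists_switch [DecidableEq V] {X Y : Finset V} (hG : Gap f m (X ∪ Y) p g) (hC : Cyc G m f)
    (d : ℕ) : ∀ v ∈ X \ Y, f (p v + d) ∈ Y → ∃ v' ∈ X \ Y, f (p v' + g v') ∈ Y := by
  induction d using Nat.strong_induction_on with
  | _ d ih =>
    intro v hv hd
    obtain ⟨hvX, hvY⟩ := mem_sdiff.1 hv
    have hvA : v ∈ X ∪ Y := mem_union_left _ hvX
    by_cases hw : f (p v + g v) ∈ Y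
    · exact ⟨v, hv, hw⟩
    have hwA := hG.next v hvA
    have hwX : f (p v + g v) ∈ X \ Y :=
      mem_sdiff.2 ⟨(mem_union.1 hwA).resolve_right hw, hw⟩
    have h1 := hG.one_le v hvA
    have hgd : g v ≤ d := by
      by_contra h
      rcases Nat.eq_zero_or_pos d with rfl | hd0
      · simp [hG.pos v hvA, hvY] at hd
      · exact hG.notMem v hvA d (by omega) (by omega) (mem_union_right _ hd)
    refine ih (d - g v).toNat (by omega) _ hwX ?_
    rw [hC.add_eq (hG.pos _ hwA), show p v + g v + ((d - g v).toNat : ℤ) = p v + d by omega]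
    exact hd

end Gap

lemma MaxP.link [Fintype V] {P : List V} {x y : V} (hP : MaxP G f P x y) {v w : V}
    (hv : v ∈ att G f x) (hw : w ∈ att G f y) : Link G v P w :=
  link_of_isP hP.isP (mem_att.1 hv).1.symm (mem_att.1 hw).1

lemma att_link [Fintype V] {x v w : V} (hv : v ∈ att G f x) (hw : w ∈ att G f x) :
    Link G v [x] w :=
  link_of_isP (IsP.singleton x) (mem_att.1 hv).1.symm (mem_att.1 hw).1

/-- A gap between attachments of opposite ends of the path is long. -/
lemma Gap.long [Fintype V] {A : Finset V} {p g : V → ℤ} (hG : Gap f m A p g) (hC : Cyc G m f)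
    {P : List V} {x y : V} (hP : MaxP G f P x y) {v : V} (hvA : v ∈ A) (hv : v ∈ att G f x)
    (hw : f (p v + g v) ∈ att G f y) : P.length + 1 ≤ g v := by
  have := hC.bypass (a := p v) (hG.one_le v hvA) (hG.lt v hvA)
    (by rw [hG.pos v hvA]; exact hP.link hv hw) hP.out
  omega

lemma Gap.long_reverse [Fintype V] {A : Finset V} {p g : V → ℤ} (hG : Gap f m A p g)
    (hC : Cyc G m f) {P : List V} {x y : V} (hP : MaxP G f P x y) {v : V} (hvA : v ∈ A)
    (hv : v ∈ att G f y) (hw : f (p v + g v) ∈ att G f x) : P.length + 1 ≤ g v := by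
  simpa using hG.long hC hP.reverse hvA hv hw

/-- A gap between attachments of the same end of the path has length at least 2. -/
lemma Gap.two_le [Fintype V] {A : Finset V} {p g : V → ℤ} (hG : Gap f m A p g) (hC : Cyc G m f)
    {x v : V} (hx : x ∉ Set.range f) (hvA : v ∈ A) (hv : v ∈ att G f x)
    (hw : f (p v + g v) ∈ att G f x) : 2 ≤ g v := by
  have := hC.bypass (a := p v) (hG.one_le v hvA) (hG.lt v hvA)
    (by rw [hG.pos v hvA]; exact att_link hv hw) (by simpa [-Set.mem_range] using hx)
  simp at this
  omega

/-- The case where the two ends of the path have different neighbourhoods on the cycle. -/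
lemma att_eq [Fintype V] [DecidableEq V] [DecidableRel G.Adj] (hC : Cyc G m f)
    (hn : Fintype.card V ≤ 3 * G.minDegree) {P : List V} {x y : V} (hP : MaxP G f P x y)
    (hl2 : 2 ≤ P.length) (hlδ : P.length ≤ G.minDegree)
    (h2 : 2 ≤ (att G f x ∪ att G f y).card) : att G f x = att G f y := by
  by_contra hne
  have hdx := hP.minDegree_le
  have hdy := hP.reverse.minDegree_le
  rw [List.length_reverse] at hdy
  set X := att G f x
  set Y := att G f y
  obtain ⟨p, g, hG⟩ := exists_gap hC (A := X ∪ Y) (by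
    intro v hv
    rcases mem_union.1 hv with h | h <;> exact (mem_att.1 h).2) h2
  obtain ⟨z, hz⟩ := card_pos.1 (show 0 < X.card by omega)
  obtain ⟨z', hz'⟩ := card_pos.1 (show 0 < Y.card by omega)
  -- `F` is the set of long gaps.
  let F := (X ∪ Y).filter fun v => (P.length : ℤ) + 1 ≤ g v
  have hmem : ∀ v, v ∈ F ↔ v ∈ X ∪ Y ∧ (P.length : ℤ) + 1 ≤ g v := by simp [F]
  have hall : ∀ v ∈ X ∪ Y, 2 ≤ g v := by
    intro v hv
    rcases mem_union.1 hv with h | h <;> rcases mem_union.1 (hG.next v hv) with h' | h'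
    · exact hG.two_le hC (hP.out x hP.isP.head_mem) hv h h'
    · have := hG.long hC hP hv h h'; omega
    · have := hG.long_reverse hC hP hv h h'; omega
    · exact hG.two_le hC (hP.out y hP.isP.last_mem) hv h h'
  have hint : X ∩ Y ⊆ F := by
    intro v hv
    have hv' := mem_inter.1 hv
    have hvA : v ∈ X ∪ Y := mem_union_left _ hv'.1
    refine (hmem v).2 ⟨hvA, ?_⟩
    rcases mem_union.1 (hG.next v hvA) with h' | h'
    · exact hG.long_reverse hC hP hvA hv'.2 h'
    · exact hG.long hC hP hvA hv'.1 h'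
  have hXY : (X \ Y).Nonempty → ∃ v ∈ F, v ∈ X \ Y := by
    rintro ⟨v, hv⟩
    have hvA : v ∈ X ∪ Y := mem_union_left _ (mem_sdiff.1 hv).1
    obtain ⟨j, hj1, -, e⟩ := hC.exists_pos (mem_att.1 hz').2 (p v)
    obtain ⟨v', hv', hn'⟩ := hG.exists_switch hC (j - p v).toNat v hv
      (by rw [show p v + ((j - p v).toNat : ℤ) = j by omega, e]; exact hz')
    have hvA' : v' ∈ X ∪ Y := mem_union_left _ (mem_sdiff.1 hv').1
    exact ⟨v', (hmem _).2 ⟨hvA', hG.long hC hP hvA' (mem_sdiff.1 hv').1 hn'⟩, hv'⟩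
  have hYX : (Y \ X).Nonempty → ∃ v ∈ F, v ∈ Y \ X := by
    rintro ⟨v, hv⟩
    have hvA : v ∈ X ∪ Y := mem_union_right _ (mem_sdiff.1 hv).1
    obtain ⟨j, hj1, -, e⟩ := hC.exists_pos (mem_att.1 hz).2 (p v)
    obtain ⟨v', hv', hn'⟩ := Gap.exists_switch (X := Y) (Y := X) (by rwa [union_comm]) hC
      (j - p v).toNat v hv (by rw [show p v + ((j - p v).toNat : ℤ) = j by omega, e]; exact hz)
    have hvA' : v' ∈ X ∪ Y := mem_union_right _ (mem_sdiff.1 hv').1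
    exact ⟨v', (hmem _).2 ⟨hvA', hG.long_reverse hC hP hvA' (mem_sdiff.1 hv').1 hn'⟩, hv'⟩
  have hcard := card_union_add_card_inter X Y
  have hF : (X ∩ Y).card + 1 ≤ F.card ∧ 2 ≤ F.card := by
    have hXe : (X ∩ Y).card + (X \ Y).card = X.card := card_inter_add_card_sdiff X Y
    have hYe : (Y ∩ X).card + (Y \ X).card = Y.card := card_inter_add_card_sdiff Y X
    rw [inter_comm] at hYe
    by_cases h1 : (X \ Y).Nonempty <;> by_cases h2 : (Y \ X).Nonempty
    · obtain ⟨v, hvF, hv⟩ := hXY h1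
      obtain ⟨w, hwF, hw⟩ := hYX h2
      have hsub : insert v (insert w (X ∩ Y)) ⊆ F := by
        simp only [insert_subset_iff]; exact ⟨hvF, hwF, hint⟩
      have := card_le_card hsub
      simp only [mem_sdiff] at hv hw
      rw [card_insert_of_notMem, card_insert_of_notMem] at this
      · omega
      · simp [hw]
      · simp only [mem_insert, mem_inter, not_or]
        refine ⟨?_, by simp [hv]⟩
        rintro rfl
        exact hv.2 hw.1
    · obtain ⟨v, hvF, hv⟩ := hXY h1
      have := card_le_card (insert_subset hvF hint)
      rw [card_insert_of_notMem (by simp [(mem_sdiff.1 hv).2])] at this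
      rw [not_nonempty_iff_eq_empty] at h2
      simp only [h2, card_empty] at hYe
      omega
    · obtain ⟨v, hvF, hv⟩ := hYX h2
      have := card_le_card (insert_subset hvF hint)
      rw [card_insert_of_notMem (by simp [(mem_sdiff.1 hv).2])] at this
      rw [not_nonempty_iff_eq_empty] at h1
      simp only [h1, card_empty] at hXe
      omega
    · rw [not_nonempty_iff_eq_empty, sdiff_eq_empty_iff_subset] at h1 h2
      exact absurd (h1.antisymm h2) hne
  have hlt : (X ∩ Y).card < (X ∪ Y).card := by
    by_contra h
    have e := eq_of_subset_of_card_le (inter_subset_left.trans subset_union_left :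
      X ∩ Y ⊆ X ∪ Y) (by omega)
    exact hne (inf_eq_sup.1 e)
  have hs1 := hG.sum_le hC hP.isP.1 hP.out
  have hs2 : ∑ v ∈ X ∪ Y, (2 + if (P.length : ℤ) + 1 ≤ g v then (P.length : ℤ) - 1 else 0) ≤
      ∑ v ∈ X ∪ Y, g v := by
    refine sum_le_sum fun v hv => ?_
    have := hall v hv
    split_ifs <;> omega
  rw [sum_add_distrib, ← sum_filter] at hs2
  change _ + ∑ v ∈ F, _ ≤ _ at hs2
  simp only [sum_const, nsmul_eq_mul] at hs2
  -- `|F| (ℓ - 1) ≥ 2 (ℓ - 1) + (|F| - 2)` is the only nonlinear estimate; the rest is linear.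
  have hmul : 0 ≤ ((F.card : ℤ) - 2) * ((P.length : ℤ) - 2) :=
    mul_nonneg (by omega) (by omega)
  have e : ((F.card : ℤ) - 2) * ((P.length : ℤ) - 2) =
    F.card * ((P.length : ℤ) - 1) - F.card - 2 * P.length + 4 := by ring
  omega

end

/-! ### Connections between gaps -/

section

variable {G : SimpleGraph V}
variable {m : ℕ} {f : ℤ → V}

/-- A connection inside `U` between two of the disjoint sets `B i` contains a path joining two of
them and otherwise avoiding them all. -/
lemma exists_crossing {ι : Type*} {U : Set V} {B : ι → Set V}
    (hdis : ∀ i j v, v ∈ B i → v ∈ B j → i = j) {i₀ j₀ : ι} (hij : i₀ ≠ j₀) {y₀ z₀ : V}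
    (hy : y₀ ∈ B i₀) (hz : z₀ ∈ B j₀) (h : Relation.ReflTransGen (StepIn G U) y₀ z₀) :
    ∃ i j, i ≠ j ∧ ∃ y ∈ B i, ∃ z ∈ B j, ∃ R, Link G y R z ∧ ∀ v ∈ R, v ∈ U ∧ ∀ k, v ∉ B k := by
  by_contra hcon
  -- `N` is the part of `U` outside all the `B i`; one follows the connection up to the first vertex
  -- in some `B k` with `k ≠ i₀`.
  let N : Set V := {v | v ∈ U ∧ ∀ k, v ∉ B k}
  have key : ∀ w, Relation.ReflTransGen (StepIn G U) y₀ w → w ∈ B i₀ ∨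
      w ∈ N ∧ ∃ y ∈ B i₀, ∃ s ∈ N, G.Adj y s ∧ Relation.ReflTransGen (StepIn G N) s w := by
    intro w hw
    induction hw with
    | refl => exact .inl hy
    | @tail w w' _ hst ih =>
      by_cases hk : ∃ k, w' ∈ B k
      · obtain ⟨k, hk⟩ := hk
        by_cases hki : k = i₀
        · exact .inl (hki ▸ hk)
        exfalso
        rcases ih with hwB | ⟨hwN, y, hyB, s, hs, hys, hsw⟩
        · exact hcon ⟨i₀, k, Ne.symm hki, w, hwB, w', hk, [], link_nil.2 hst.1, by simp⟩
        · obtain ⟨L, hL, hLN⟩ := exists_isP hs hsw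
          exact hcon ⟨i₀, k, Ne.symm hki, y, hyB, w', hk, L, link_of_isP hL hys hst.1, hLN⟩
      · have hN : w' ∈ N := ⟨hst.2.2, fun k hw' => hk ⟨k, hw'⟩⟩
        rcases ih with hwB | ⟨hwN, y, hyB, s, hs, hys, hsw⟩
        · exact .inr ⟨hN, w, hwB, w', hN, hst.1, .refl⟩
        · exact .inr ⟨hN, y, hyB, s, hs, hys, hsw.tail ⟨hst.1, hwN, hN⟩⟩
  rcases key _ h with h | h
  · exact hij (hdis _ _ _ h hz)
  · exact h.1.2 _ hz

lemma IsP.link_trans {L R : List V} {v s q z : V} (h : IsP G L s q) (hv : G.Adj v s)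
    (hR : Link G q R z) (hd : ∀ u ∈ L, u ∉ R) : Link G v (L ++ R) z := by
  rcases hR.cases with ⟨rfl, ha⟩ | ⟨a, b, hab, h1, h2⟩
  · simpa using link_of_isP h hv ha
  · exact link_of_isP (h.append hab h1 hd) hv h2

variable [Fintype V] {p g : V → ℤ} {P : List V} {x y : V}

/-- A path `R` from the off-cycle path `P` to the interior of a gap makes this gap longer by two:
the two parts of `P` give bypasses of the two parts of the gap. -/
lemma Gap.jump_off (hC : Cyc G m f) (hP : MaxP G f P x y) (hxy : att G f x = att G f y)
    (hG : Gap f m (att G f x) p g) {v q : V} {t : ℤ} {R : List V} (hv : v ∈ att G f x)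
    (ht0 : 0 < t) (htg : t < g v) (hq : q ∈ P) (hR : Link G q R (f (p v + t)))
    (hRf : ∀ u ∈ R, u ∉ Set.range f) (hRP : ∀ u ∈ R, u ∉ P) : (P.length : ℤ) + 3 ≤ g v := by
  obtain ⟨P1, P2, rfl⟩ := List.append_of_mem hq
  obtain ⟨h1, h2⟩ := hP.isP.split
  have hlt := hG.lt v hv
  have hn := hG.next v hv
  rw [hxy] at hn
  have hvx := (mem_att.1 hv).1.symm
  have hny := (mem_att.1 hn).1.symm
  have b1 := hC.bypass (a := p v) (g := t) (R := (P1 ++ [q]) ++ R) (by omega) (by omega)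
    (by
      rw [hG.pos v hv]
      exact h1.link_trans hvx hR fun u hu hu' => hRP u hu' (by simp at hu ⊢; tauto))
    (by
      intro u hu
      rcases List.mem_append.1 hu with hu | hu
      · exact hP.out u (by simp at hu ⊢; tauto)
      · exact hRf u hu)
  have b2 := hC.bypass (a := p v + t) (g := g v - t) (R := ((q :: P2).reverse ++ R).reverse)
    (by omega) (by omega)
    (by
      rw [show p v + t + (g v - t) = p v + g v by ring]
      exact (h2.reverse.link_trans hny hR fun u hu hu' =>
        hRP u hu' (by simp at hu ⊢; tauto)).reverse)
    (by
      intro u hu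
      rcases List.mem_append.1 (List.mem_reverse.1 hu) with hu | hu
      · exact hP.out u (by simp at hu ⊢; tauto)
      · exact hRf u hu)
  simp at b1 b2 ⊢
  omega

/-- A path between the interiors of two gaps makes these gaps longer by two in total. The bound adds the
estimates of `Cyc.swap` for the two ways round the cycle. -/
lemma Gap.jump_gap (hC : Cyc G m f) (hP : MaxP G f P x y) (hxy : att G f x = att G f y)
    (hG : Gap f m (att G f x) p g) {v w : V} {l j : ℤ} {R : List V} (hv : v ∈ att G f x)
    (hw : w ∈ att G f x) (hvw : v ≠ w) (hl0 : 0 < l) (hlg : l < g v) (hj0 : 0 < j) (hjg : j < g w)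
    (hR : Link G (f (p v + l)) R (f (p w + j)))
    (hRf : ∀ u ∈ R, u ∉ Set.range f) (hRP : ∀ u ∈ R, u ∉ P) :
    2 * (P.length : ℤ) + 4 ≤ g v + g w := by
  obtain ⟨c, hc, hgc, hcm⟩ := hG.order hC (fun v hv => (mem_att.1 hv).2) hv hw hvw
  have hpw : f (p w) = f (p v + c) := by rw [hG.pos w hw, hc]
  have hnv := hG.next v hv
  have hnw := hG.next w hw
  rw [hC.add_eq hpw] at hnw hR
  have s1 := hC.swap (a := p v) (l := l) (c := c) (j := j) (R := P) (R' := R.reverse)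
    (by omega) (by omega) (by omega) (by omega)
    (by rw [hc, hG.pos v hv]; exact hP.link hw (hxy ▸ hv)) hR.reverse hP.out
    (fun u hu => ⟨hRf u (by simpa using hu), hRP u (by simpa using hu)⟩) hP.isP.ne_nil
  -- The same exchange on the reversed cycle, starting from the end of the gap after `w`.
  have s2 := hC.rev.swap (a := -(p v + c + g w)) (l := g w - j) (c := c + g w - g v)
    (j := g v - l) (R := P) (R' := R) (by omega) (by omega) (by omega) (by omega)
    (by
      show Link G (f (-(-(p v + c + g w) + (c + g w - g v)))) P (f (- -(p v + c + g w)))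
      rw [neg_neg, show -(-(p v + c + g w) + (c + g w - g v)) = p v + g v by ring]
      exact hP.link hnv (hxy ▸ hnw))
    (by
      show Link G (f (-(-(p v + c + g w) + (c + g w - g v) + (g v - l)))) R
        (f (-(-(p v + c + g w) + (g w - j))))
      rw [show -(-(p v + c + g w) + (c + g w - g v) + (g v - l)) = p v + l by ring,
        show -(-(p v + c + g w) + (g w - j)) = p v + c + j by ring]
      exact hR)
    (by rintro u hu ⟨i, rfl⟩; exact hP.out _ hu ⟨_, rfl⟩)
    (fun u hu => ⟨by rintro ⟨i, rfl⟩; exact hRf _ hu ⟨_, rfl⟩, hRP u hu⟩) hP.isP.ne_nil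
  rw [List.length_reverse] at s1
  omega

/-- The case where the two ends of the path have the same set `A` of neighbours on the cycle.
Toughness, applied to `A`, the path and the `|A|` gaps, connects two of these off `A`. -/
lemma att_ne [DecidableEq V] [DecidableRel G.Adj] (hT : OneTough G) (hC : Cyc G m f)
    (hn : Fintype.card V ≤ 3 * G.minDegree) (hP : MaxP G f P x y)
    (hl2 : 2 ≤ P.length) (hk : 2 ≤ (att G f x).card) : att G f x ≠ att G f y := by
  intro hxy
  have hdx := hP.minDegree_le
  set A := att G f x with hAdef
  have hAf : ∀ v ∈ A, v ∈ Set.range f := fun v hv => (mem_att.1 hv).2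
  obtain ⟨p, g, hG⟩ := exists_gap hC hAf hk
  have hlong : ∀ v ∈ A, (P.length : ℤ) + 1 ≤ g v := fun v hv =>
    hG.long hC hP hv hv (hxy ▸ hG.next v hv)
  -- The label `none` stands for the path, and `some v` for the interior of the gap after `v`.
  let B : Option A → Set V := fun o => o.elim {v | v ∈ P}
    fun v => {u | ∃ t, 0 < t ∧ t < g v ∧ f (p v + t) = u}
  have hdis : ∀ i j v, v ∈ B i → v ∈ B j → i = j := by
    rintro (_ | v) (_ | w) u hu hu'
    · rfl
    · obtain ⟨t, -, -, rfl⟩ := hu'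
      exact absurd ⟨_, rfl⟩ (hP.out _ hu)
    · obtain ⟨t, -, -, rfl⟩ := hu
      exact absurd ⟨_, rfl⟩ (hP.out _ hu')
    · obtain ⟨t, h1, h2, rfl⟩ := hu
      obtain ⟨t', h1', h2', e⟩ := hu'
      have := (hG.inj hC w.2 v.2 h1'.le h2' h1.le h2 e).1
      rw [Subtype.ext this]
  let b : Option A → V := fun o => o.elim x fun v => f (p v + 1)
  have hbB : ∀ o, b o ∈ B o := by
    rintro (_ | v)
    · exact hP.isP.head_mem
    · have := hlong v v.2
      exact ⟨1, by omega, by omega, rfl⟩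
  have hbA : ∀ o, b o ∉ A := by
    rintro (_ | v) h
    · exact hP.out _ hP.isP.head_mem (hAf _ h)
    · have := hlong v v.2
      exact hG.notMem v v.2 1 (by omega) (by omega) h
  obtain ⟨i₀, j₀, hij, hpath⟩ := hT.exists_path A b hbA
    (by rw [Fintype.card_option, Fintype.card_coe]; omega)
    (by rw [Fintype.card_option, Fintype.card_coe]; omega)
  obtain ⟨i, j, hij, q, hq, z, hz, R, hR, hRN⟩ :=
    exists_crossing hdis hij (hbB i₀) (hbB j₀) hpath
  have hRP : ∀ u ∈ R, u ∉ P := fun u hu => (hRN u hu).2 none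
  have hRf : ∀ u ∈ R, u ∉ Set.range f := by
    intro u hu hur
    obtain ⟨w, hw, t, ht0, htg, rfl⟩ := hG.cover hC hAf (card_pos.1 (by omega)) hur
    rcases ht0.eq_or_lt with rfl | h
    · refine (hRN _ hu).1 ?_
      rw [add_zero, hG.pos w hw]; exact hw
    · exact (hRN _ hu).2 (some ⟨w, hw⟩) ⟨t, h, htg, rfl⟩
  have hsum : (A.card : ℤ) * (P.length + 1) + 2 ≤ ∑ v ∈ A, g v := by
    have one : ∀ v ∈ A, (P.length : ℤ) + 3 ≤ g v →
        (A.card : ℤ) * (P.length + 1) + 2 ≤ ∑ v ∈ A, g v := by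
      intro v hv h
      rw [← add_sum_erase A g hv]
      have h1 := card_nsmul_le_sum (A.erase v) g ((P.length : ℤ) + 1)
        fun u hu => hlong u (mem_of_mem_erase hu)
      have h2 := card_erase_add_one hv
      rw [nsmul_eq_mul] at h1
      rw [← h2]; push_cast; linarith
    rcases i with _ | v <;> rcases j with _ | w
    · exact absurd rfl hij
    · obtain ⟨t, h1, h2, rfl⟩ := hz
      exact one w w.2 (hG.jump_off hC hP hxy w.2 h1 h2 hq hR hRf hRP)
    · obtain ⟨t, h1, h2, rfl⟩ := hq
      exact one v v.2 (hG.jump_off hC hP hxy v.2 h1 h2 hz hR.reverse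
        (by simpa [-Set.mem_range] using hRf) (by simpa using hRP))
    · obtain ⟨l, h1, h2, rfl⟩ := hq
      obtain ⟨t, h3, h4, rfl⟩ := hz
      have hvw : v.1 ≠ w.1 := fun e => hij (by rw [Subtype.ext e])
      have key := hG.jump_gap hC hP hxy v.2 w.2 hvw h1 h2 h3 h4 hR hRf hRP
      have hw' : w.1 ∈ A.erase v := mem_erase.2 ⟨hvw.symm, w.2⟩
      rw [← add_sum_erase A g v.2, ← add_sum_erase _ g hw']
      have e1 := card_nsmul_le_sum ((A.erase v).erase w) g ((P.length : ℤ) + 1)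
        fun u hu => hlong u (mem_of_mem_erase (mem_of_mem_erase hu))
      have e2 := card_erase_add_one v.2
      have e3 := card_erase_add_one hw'
      rw [nsmul_eq_mul] at e1
      rw [← e2, ← e3]; push_cast; linarith
  have hs1 := hG.sum_le hC hP.isP.1 hP.out
  have hmul : 0 ≤ ((A.card : ℤ) - 2) * ((P.length : ℤ) - 2) :=
    mul_nonneg (by omega) (by omega)
  have e : ((A.card : ℤ) - 2) * ((P.length : ℤ) - 2) =
    A.card * ((P.length : ℤ) + 1) - 3 * A.card - 2 * P.length + 4 := by ring
  omega

end

theorem stmt_19 [Fintype V] [DecidableEq V] (G : SimpleGraph V) [DecidableRel G.Adj]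
    (ht : OneTough G) (hδ : Fintype.card V ≤ 3 * G.minDegree)
    {u : V} (c : G.Walk u u) (hc : IsLongestCycle c) :
    IsDominating c := by
  intro a b hab
  by_contra hcon
  push Not at hcon
  obtain ⟨f, hC, hf⟩ := hc.exists_cyc
  obtain ⟨P, x, y, hP, hl2, hlδ, h2⟩ := exists_good_path ht hC hδ hab
    (fun h => hcon.1 ((hf a).2 h)) (fun h => hcon.2 ((hf b).2 h))
  have hxy := att_eq hC hδ hP hl2 hlδ h2
  rw [← hxy, union_self] at h2
  exact att_ne ht hC hδ hP hl2 h2 hxy
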